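/- In the setting below, assume additionally that the closure of Per_H equals M and that δ ∈ (0, ν) is such that X_δ has finitely many maximal chains that are pairwise disjoint, each accumulating at x. Let p ∈ X_δ, write [p] for the maximal chain of X_δ containing p and S_{[p]} = closure(⋃_{q∈[p]} Ŝ_q). Then for every z ∈ ∂S_{[p]} ∩ B_δ(x) and every ρ > 0 there exists an open neighborhood V of z such that for every q ∈ [p] ∩ V one has S_{[p]} ∩ closure(B_δ(x)) ⊆ Ŝ_q ∪ B_ρ(∂S_{[p]}), where B_ρ(A) = {w : dist(w, A) < ρ} and ∂ denotes the topological frontier in M. -/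

import Mathlib

open Metric Set

variable {M : Type*} [MetricSpace M]

/-- Iterates of a homeomorphism, indexed by `ℤ`. -/
def iterZ (f : M ≃ₜ M) (k : ℤ) (x : M) : M := (f.toEquiv ^ k) x

/-- `f` is expansive with expansivity constant `α`. -/
def IsExpansive (f : M ≃ₜ M) (α : ℝ) : Prop :=
  ∀ x y : M, x ≠ y → ∃ k : ℤ, α < dist (iterZ f k x) (iterZ f k y)

/-- Stable set of `x`. -/
def Ws (f : M ≃ₜ M) (x : M) : Set M :=
  {y | Filter.Tendsto (fun k : ℤ => dist (iterZ f k x) (iterZ f k y)) Filter.atTop (nhds 0)}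

/-- Unstable set of `x`. -/
def Wu (f : M ≃ₜ M) (x : M) : Set M :=
  {y | Filter.Tendsto (fun k : ℤ => dist (iterZ f k x) (iterZ f k y)) Filter.atBot (nhds 0)}

/-- Local (`ε`-local) stable set of `x`. -/
def WsLoc (f : M ≃ₜ M) (ε : ℝ) (x : M) : Set M :=
  {y | ∀ k : ℤ, 0 ≤ k → dist (iterZ f k x) (iterZ f k y) ≤ ε}

/-- Local (`ε`-local) unstable set of `x`. -/
def WuLoc (f : M ≃ₜ M) (ε : ℝ) (x : M) : Set M :=
  {y | ∀ k : ℤ, k ≤ 0 → dist (iterZ f k x) (iterZ f k y) ≤ ε}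

/-- The model space `ℝ^r × ℝ^{n-r}`. -/
abbrev ModelSp (n r : ℕ) := (Fin r → ℝ) × (Fin (n - r) → ℝ)

/-- The model hyperbolic linear map `L(a,b) = (a/2, 2b)`. -/
noncomputable def modelL (n r : ℕ) : ModelSp n r → ModelSp n r :=
  fun q => (fun i => q.1 i / 2, fun i => 2 * q.2 i)

/-- Topologically hyperbolic periodic points of index `r` (`Per_H^r`). -/
def PerHr (f : M ≃ₜ M) (n r : ℕ) : Set M :=
  {p | ∃ l : ℕ, 1 ≤ l ∧ (f.toEquiv ^ l) p = p ∧
    ∃ (U : Set M) (V : Set (ModelSp n r)) (h : U ≃ₜ V),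
      IsOpen U ∧ IsOpen V ∧ (0 : ModelSp n r) ∈ V ∧
      ∃ hp : p ∈ U, ((h ⟨p, hp⟩ : V) : ModelSp n r) = 0 ∧
        ∀ z : M, ∀ hz : z ∈ U, ∀ hz' : (f.toEquiv ^ l) z ∈ U,
          ((h ⟨(f.toEquiv ^ l) z, hz'⟩ : V) : ModelSp n r) = modelL n r (h ⟨z, hz⟩)}

/-- All topologically hyperbolic periodic points (`Per_H`). -/
def PerH (f : M ≃ₜ M) (n : ℕ) : Set M := ⋃ r ∈ Finset.range (n + 1), PerHr f n r

/-- `p` admits a local product structure. -/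
def AdmitsLPS (f : M ≃ₜ M) (n : ℕ) (p : M) : Prop :=
  ∃ (k : ℕ) (h : (Fin k → ℝ) × (Fin (n - k) → ℝ) → M) (ε : ℝ),
    0 < ε ∧ Topology.IsEmbedding h ∧ p ∈ Set.range h ∧
    ∀ x : Fin k → ℝ, ∀ y : Fin (n - k) → ℝ,
      h '' ({x} ×ˢ univ) = WsLoc f ε (h (x, y)) ∩ Set.range h ∧
      h '' (univ ×ˢ {y}) = WuLoc f ε (h (x, y)) ∩ Set.range h

/-- `D` has exactly two connected components, namely `V₁` and `V₂`. -/
def TwoComponents {M : Type*} [TopologicalSpace M] (D V₁ V₂ : Set M) : Prop :=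
  V₁ ≠ V₂ ∧
  (∀ y ∈ D, connectedComponentIn D y = V₁ ∨ connectedComponentIn D y = V₂) ∧
  (∃ y ∈ D, connectedComponentIn D y = V₁) ∧ (∃ y ∈ D, connectedComponentIn D y = V₂)

variable {M : Type*} [MetricSpace M]

/-- `S_p = cc_p(W^s(p) ∩ B_ν(x))`. -/
def SpSet (f : M ≃ₜ M) (x : M) (ν : ℝ) (p : M) : Set M :=
  connectedComponentIn (Ws f p ∩ Metric.ball x ν) p

/-- `U_p = cc_p(W^u(p) ∩ B_ν(x))`. -/
def UpSet (f : M ≃ₜ M) (x : M) (ν : ℝ) (p : M) : Set M :=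
  connectedComponentIn (Wu f p ∩ Metric.ball x ν) p

/-- `Ŝ_p = B_ν(x) \ cc_x(B_ν(x) \ S_p)`. -/
def ShatSet (f : M ≃ₜ M) (x : M) (ν : ℝ) (p : M) : Set M :=
  Metric.ball x ν \ connectedComponentIn (Metric.ball x ν \ SpSet f x ν p) x

/-- `X_δ = Per_H^{n-1} ∩ B_δ(x)`. -/
def Xdelta (f : M ≃ₜ M) (n : ℕ) (x : M) (δ : ℝ) : Set M :=
  PerHr f n (n - 1) ∩ Metric.ball x δ

/-- `C` is a chain of `(X_δ, ≤)`, where `p ≤ q ↔ Ŝ_p ⊆ Ŝ_q`. -/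
def IsChainIn (f : M ≃ₜ M) (n : ℕ) (x : M) (ν δ : ℝ) (C : Set M) : Prop :=
  C ⊆ Xdelta f n x δ ∧
  ∀ p ∈ C, ∀ q ∈ C, ShatSet f x ν p ⊆ ShatSet f x ν q ∨ ShatSet f x ν q ⊆ ShatSet f x ν p

/-- `C` is a maximal chain of `(X_δ, ≤)`. -/
def IsMaxChainIn (f : M ≃ₜ M) (n : ℕ) (x : M) (ν δ : ℝ) (C : Set M) : Prop :=
  IsChainIn f n x ν δ C ∧ ∀ C' : Set M, IsChainIn f n x ν δ C' → C ⊆ C' → C' = C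

/-!
Let `T` be the union of the umbrellas `Ŝ_q` over the chain. As the chain accumulates at `x` while no
plaque of it contains `x`, each umbrella lies in the interior of another one, so `T` is open and
every compact subset of `T` lies in the interior of a single `Ŝ_j`; the complement of `Ŝ_j` is then
the required neighbourhood of `z`, because a plaque `S_q` reaching outside `Ŝ_j` has `Ŝ_j ⊆ Ŝ_q`.

It remains to see that `T` contains every point `w` of `B_ν(x)` interior to the closure of `T`.
Otherwise every point near `w` outside `T` is a limit of points of plaques `S_q` converging to `w`
as well, hence lies in the local stable set of `w`; by expansivity the local unstable set of `w`
meets a small sphere about `w` only inside `T`, hence only inside the interior of one `Ŝ_q`. But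
a hyperbolic periodic point near `w` and outside `Ŝ_q` has a piece of local unstable set that avoids
`Ŝ_q` and reaches the sphere: it meets `S_q` at most once, so one half of an unstable arc misses
`S_q`. In the limit, the local unstable set of `w` meets the sphere outside the interior of `Ŝ_q`, a
contradiction.
-/

open Filter Topology

/-! ### Fillings and umbrella chains -/

section Topology

variable {X ι : Type*} [TopologicalSpace X] {B P S : Set X} {x y : X}

/-- The filling of `S` in `B` as seen from `x`: the set `S` together with everything that `S`
separates from `x` inside `B`. For `B = B_ν(x)` and `S = S_p` this is `Ŝ_p`. When `x ∈ S` the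
component is empty, so the filling is all of `B`. -/
def filling (B S : Set X) (x : X) : Set X := B \ connectedComponentIn (B \ S) x

theorem subset_filling (hSB : S ⊆ B) : S ⊆ filling B S x :=
  fun _ hy => ⟨hSB hy, fun h => (connectedComponentIn_subset _ _ h).2 hy⟩

theorem filling_eq_of_mem (hx : x ∈ S) : filling B S x = B := by
  rw [filling, connectedComponentIn_eq_empty fun h => h.2 hx, sdiff_empty]

theorem notMem_filling_self (hxB : x ∈ B) (hxS : x ∉ S) : x ∉ filling B S x :=
  fun h => h.2 (mem_connectedComponentIn ⟨hxB, hxS⟩)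

theorem sdiff_filling : B \ filling B S x = connectedComponentIn (B \ S) x :=
  Set.sdiff_sdiff_cancel_left ((connectedComponentIn_subset _ _).trans sdiff_subset)

theorem isOpen_sdiff_filling [LocallyConnectedSpace X] (h : IsOpen (B \ S)) :
    IsOpen (B \ filling B S x) := by
  rw [sdiff_filling]
  exact h.connectedComponentIn

theorem disjoint_filling_of_isPreconnected (hP : IsPreconnected P) (hPB : P ⊆ B)
    (hPS : Disjoint P S) (hyP : y ∈ P) (hy : y ∉ filling B S x) :
    Disjoint P (filling B S x) := by
  have hyx : y ∈ connectedComponentIn (B \ S) x := sdiff_filling.subset ⟨hPB hyP, hy⟩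
  have hPx : P ⊆ connectedComponentIn (B \ S) x := connectedComponentIn_eq hyx ▸
    hP.subset_connectedComponentIn hyP (subset_sdiff.2 ⟨hPB, hPS⟩)
  exact disjoint_sdiff_right.mono_left hPx

theorem filling_sdiff_subset_interior [LocallyConnectedSpace X] (h : IsOpen (B \ S)) :
    filling B S x \ S ⊆ interior (filling B S x) := by
  intro y hy
  have hyBS : y ∈ B \ S := ⟨hy.1.1, hy.2⟩
  have hsub : connectedComponentIn (B \ S) y ⊆ B \ S := connectedComponentIn_subset _ _
  refine mem_interior.2 ⟨_, fun u hu => ?_, h.connectedComponentIn, mem_connectedComponentIn hyBS⟩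
  by_contra hux
  exact disjoint_left.1 (disjoint_filling_of_isPreconnected isPreconnected_connectedComponentIn
    (hsub.trans sdiff_subset) (disjoint_sdiff_left.mono_left hsub) hu hux)
    (mem_connectedComponentIn hyBS) hy.1

theorem exists_subset_interior_of_isCompact [Nonempty ι] {F : ι → Set X} {K : Set X}
    (hdir : Directed (· ⊆ ·) F) (hF : ∀ i, ∃ j, F i ⊆ interior (F j)) (hK : IsCompact K)
    (hKF : K ⊆ ⋃ i, F i) : ∃ i, K ⊆ interior (F i) := by
  refine hK.elim_directed_cover _ (fun i => isOpen_interior) (fun y hy => ?_) fun i j => ?_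
  · obtain ⟨i, hi⟩ := mem_iUnion.1 (hKF hy)
    obtain ⟨j, hj⟩ := hF i
    exact mem_iUnion.2 ⟨j, hj hi⟩
  · obtain ⟨k, hik, hjk⟩ := hdir i j
    exact ⟨k, interior_mono hik, interior_mono hjk⟩

theorem sdiff_thickening_frontier_subset_interior {Y : Type*} [PseudoEMetricSpace Y] {A : Set Y}
    {ρ : ℝ} (hρ : 0 < ρ) : A \ thickening ρ (frontier A) ⊆ interior A := by
  rintro y ⟨hyA, hyρ⟩
  by_contra hyi
  exact hyρ (self_subset_thickening hρ _ ⟨subset_closure hyA, hyi⟩)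

/-- A chain of umbrellas over `x` in `B`: pairwise equal or disjoint connected sets `S i`,
relatively closed in `B` and missing `x`, whose fillings are totally ordered by inclusion and which
accumulate at `x`. It records the topology of a maximal chain `[p]`, with `S q = S_q`. -/
structure IsUmbrellaChain (B : Set X) (x : X) (S : ι → Set X) : Prop where
  isOpen : IsOpen B
  mem : x ∈ B
  subset : ∀ i, S i ⊆ B
  notMem : ∀ i, x ∉ S i
  isPreconnected : ∀ i, IsPreconnected (S i)
  isOpen_sdiff : ∀ i, IsOpen (B \ S i)
  eq_or_disjoint : ∀ i j, S i = S j ∨ Disjoint (S i) (S j)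
  total : ∀ i j, filling B (S i) x ⊆ filling B (S j) x ∨ filling B (S j) x ⊆ filling B (S i) x
  accumulates : ∀ U ∈ 𝓝 x, ∃ i, (S i ∩ U).Nonempty

namespace IsUmbrellaChain

variable {S : ι → Set X}

theorem nonempty (h : IsUmbrellaChain B x S) : Nonempty ι :=
  let ⟨i, _⟩ := h.accumulates univ univ_mem
  ⟨i⟩

theorem directed (h : IsUmbrellaChain B x S) : Directed (· ⊆ ·) fun i => filling B (S i) x :=
  fun i j => (h.total i j).elim (fun hij => ⟨j, hij, Subset.rfl⟩) fun hji => ⟨i, Subset.rfl, hji⟩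

theorem filling_subset_of_notMem {i j : ι} (h : IsUmbrellaChain B x S) (hyj : y ∈ S j)
    (hyi : y ∉ filling B (S i) x) : filling B (S i) x ⊆ filling B (S j) x :=
  (h.total i j).resolve_right fun hji => hyi (hji (subset_filling (h.subset j) hyj))

variable [LocallyConnectedSpace X]

theorem exists_filling_subset_interior (h : IsUmbrellaChain B x S) (i : ι) :
    ∃ j, filling B (S i) x ⊆ interior (filling B (S j) x) := by
  have hxi : B \ filling B (S i) x ∈ 𝓝 x := (isOpen_sdiff_filling (h.isOpen_sdiff i)).mem_nhds
    ⟨h.mem, notMem_filling_self h.mem (h.notMem i)⟩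
  obtain ⟨j, u, huj, hui⟩ := h.accumulates _ hxi
  have hji : Disjoint (S j) (S i) := (h.eq_or_disjoint j i).resolve_left fun heq =>
    hui.2 (subset_filling (h.subset i) (heq ▸ huj))
  have hdisj : Disjoint (S j) (filling B (S i) x) :=
    disjoint_filling_of_isPreconnected (h.isPreconnected j) (h.subset j) hji huj hui.2
  exact ⟨j, (subset_sdiff.2 ⟨h.filling_subset_of_notMem huj hui.2, hdisj.symm⟩).trans
    (filling_sdiff_subset_interior (h.isOpen_sdiff j))⟩

theorem exists_subset_interior_filling {K : Set X} (h : IsUmbrellaChain B x S) (hK : IsCompact K)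
    (hKS : K ⊆ ⋃ i, filling B (S i) x) : ∃ i, K ⊆ interior (filling B (S i) x) :=
  have := h.nonempty
  exists_subset_interior_of_isCompact h.directed h.exists_filling_subset_interior hK hKS

theorem isOpen_iUnion_filling (h : IsUmbrellaChain B x S) : IsOpen (⋃ i, filling B (S i) x) := by
  refine isOpen_iff_mem_nhds.2 fun y hy => ?_
  obtain ⟨i, hi⟩ := mem_iUnion.1 hy
  obtain ⟨j, hj⟩ := h.exists_filling_subset_interior i
  exact mem_of_superset (mem_interior_iff_mem_nhds.1 (hj hi))
    (subset_iUnion (fun k => filling B (S k) x) j)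

theorem exists_isOpen_subset_filling {K : Set X} {z : X} (h : IsUmbrellaChain B x S)
    (hK : IsCompact K) (hKS : K ⊆ ⋃ i, filling B (S i) x) (hzB : z ∈ B)
    (hz : z ∉ ⋃ i, filling B (S i) x) :
    ∃ V, IsOpen V ∧ z ∈ V ∧ ∀ i, (S i ∩ V).Nonempty → K ⊆ filling B (S i) x := by
  obtain ⟨j, hj⟩ := h.exists_subset_interior_filling hK hKS
  refine ⟨B \ filling B (S j) x, isOpen_sdiff_filling (h.isOpen_sdiff j),
    ⟨hzB, fun hzj => hz (mem_iUnion_of_mem j hzj)⟩, fun i ⟨u, hui, huj⟩ => ?_⟩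
  exact (hj.trans interior_subset).trans (h.filling_subset_of_notMem hui huj.2)

-- A connected neighbourhood of `y` that meets a filling but is not contained in it must meet the
-- bounding set `S j`.
theorem exists_forall_inter_nonempty {U : Set X} (h : IsUmbrellaChain B x S) (hyB : y ∈ B)
    (hycl : y ∈ closure (⋃ i, filling B (S i) x)) (hy : y ∉ ⋃ i, filling B (S i) x)
    (hU : U ∈ 𝓝 y) :
    ∃ i, ∀ j, filling B (S i) x ⊆ filling B (S j) x → (S j ∩ U).Nonempty := by
  obtain ⟨W, hWU, hWo, hyW, hW⟩ := locallyConnectedSpace_iff_subsets_isOpen_isConnected.1 ‹_› y _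
    (inter_mem (h.isOpen.mem_nhds hyB) hU)
  obtain ⟨u, huW, hu⟩ := mem_closure_iff.1 hycl W hWo hyW
  obtain ⟨i, hui⟩ := mem_iUnion.1 hu
  refine ⟨i, fun j hij => ?_⟩
  by_contra hempty
  have hWS : Disjoint W (S j) := disjoint_left.2 fun v hvW hvS => hempty ⟨v, hvS, (hWU hvW).2⟩
  exact disjoint_left.1 (disjoint_filling_of_isPreconnected hW.isPreconnected
    (hWU.trans inter_subset_left) hWS hyW fun hyj => hy (mem_iUnion_of_mem j hyj)) huW (hij hui)

theorem mk_mem_of_isClosed {R : Set (X × X)} {z : X} (h : IsUmbrellaChain B x S) (hR : IsClosed R)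
    (hSR : ∀ i, S i ×ˢ S i ⊆ R)
    (hy : y ∈ (B ∩ closure (⋃ i, filling B (S i) x)) \ ⋃ i, filling B (S i) x)
    (hz : z ∈ (B ∩ closure (⋃ i, filling B (S i) x)) \ ⋃ i, filling B (S i) x) : (y, z) ∈ R := by
  rw [← hR.closure_eq, mem_closure_iff_nhds]
  intro N hN
  obtain ⟨U, hU, V, hV, hUV⟩ := mem_nhds_prod_iff.1 hN
  obtain ⟨i, hi⟩ := h.exists_forall_inter_nonempty hy.1.1 hy.1.2 hy.2 hU
  obtain ⟨j, hj⟩ := h.exists_forall_inter_nonempty hz.1.1 hz.1.2 hz.2 hV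
  obtain ⟨k, hik, hjk⟩ := h.directed i j
  obtain ⟨a, haS, haU⟩ := hi k hik
  obtain ⟨b, hbS, hbV⟩ := hj k hjk
  exact ⟨(a, b), hUV ⟨haU, hbV⟩, hSR k ⟨haS, hbS⟩⟩

end IsUmbrellaChain

end Topology

/-! ### Stable and unstable sets -/

section Iterates

variable (f : M ≃ₜ M) {d : M} {l : ℕ}

theorem iterZ_eq_coe_zpow (k : ℤ) : iterZ f k = ⇑(f ^ k) :=
  let toPerm : (M ≃ₜ M) →* Equiv.Perm M := ⟨⟨Homeomorph.toEquiv, rfl⟩, fun _ _ => rfl⟩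
  congrArg DFunLike.coe (map_zpow toPerm f k).symm

theorem continuous_iterZ (k : ℤ) : Continuous (iterZ f k) := by
  rw [iterZ_eq_coe_zpow]
  exact (f ^ k).continuous

theorem injective_iterZ (k : ℤ) : Function.Injective (iterZ f k) := (f.toEquiv ^ k).injective

theorem iterZ_add (j k : ℤ) (y : M) : iterZ f (j + k) y = iterZ f j (iterZ f k y) := by
  simp only [iterZ, zpow_add, Equiv.Perm.coe_mul, Function.comp_apply]

theorem iterZ_natCast (l : ℕ) : iterZ f l = ⇑(f.toEquiv ^ l) := by
  ext y
  rw [iterZ, zpow_natCast]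

theorem iterate_iterZ (m : ℕ) (y : M) : (iterZ f l)^[m] y = iterZ f (l * m) y := by
  rw [iterZ, zpow_mul, zpow_natCast, ← Equiv.Perm.iterate_eq_pow]
  rfl

theorem iterZ_symm (k : ℤ) (y : M) : iterZ f.symm k y = iterZ f (-k) y := by
  have hsymm : f.symm.toEquiv = f.toEquiv⁻¹ := rfl
  rw [iterZ, iterZ, hsymm, inv_zpow']

variable {f}

theorem iterZ_mul_of_fixed (hd : iterZ f l d = d) (k : ℤ) : iterZ f (l * k) d = d := by
  rw [iterZ, zpow_mul]
  exact Equiv.Perm.zpow_apply_eq_self_of_apply_eq_self hd k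

end Iterates

section StableSets

variable {f : M ≃ₜ M} {ε : ℝ} {a b d p y : M} {l : ℕ}

theorem mem_Ws_self : p ∈ Ws f p := by
  simp only [Ws, mem_ofPred_eq, dist_self, tendsto_const_nhds]

theorem mem_Ws_comm : a ∈ Ws f b ↔ b ∈ Ws f a := by
  simp only [Ws, mem_ofPred_eq, dist_comm]

theorem mem_Ws_trans (hap : a ∈ Ws f p) (hba : b ∈ Ws f a) : b ∈ Ws f p :=
  squeeze_zero (fun _ => dist_nonneg) (fun _ => dist_triangle _ _ _)
    (by simpa only [add_zero] using Tendsto.add hap hba)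

theorem Ws_eq_of_mem (h : a ∈ Ws f p) : Ws f a = Ws f p :=
  Subset.antisymm (fun _ hb => mem_Ws_trans h hb) fun _ hb => mem_Ws_trans (mem_Ws_comm.1 h) hb

theorem Ws_symm : Ws f.symm = Wu f := by
  ext p y
  have hneg : map Neg.neg (atTop : Filter ℤ) = atBot := map_neg_atTop
  simp only [Ws, Wu, mem_ofPred_eq, iterZ_symm, ← hneg, tendsto_map'_iff]
  rfl

theorem WsLoc_symm : WsLoc f.symm ε = WuLoc f ε := by
  ext p y
  simp only [WsLoc, WuLoc, mem_ofPred_eq, iterZ_symm]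
  exact (Equiv.neg ℤ).forall_congr fun k => by simp

theorem WuLoc_mono {ε' : ℝ} (h : ε ≤ ε') : WuLoc f ε p ⊆ WuLoc f ε' p :=
  fun _ hy k hk => (hy k hk).trans h

theorem mem_WsLoc_two_mul (ha : a ∈ WsLoc f ε p) (hb : b ∈ WsLoc f ε p) :
    b ∈ WsLoc f (2 * ε) a := fun k hk =>
  (dist_triangle_left _ _ (iterZ f k p)).trans (by linarith [ha k hk, hb k hk])

theorem mem_WuLoc_two_mul (ha : a ∈ WuLoc f ε p) (hb : b ∈ WuLoc f ε p) :
    b ∈ WuLoc f (2 * ε) a := by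
  rw [← WsLoc_symm] at *
  exact mem_WsLoc_two_mul ha hb

theorem isClosed_setOf_mem_WsLoc (f : M ≃ₜ M) (ε : ℝ) :
    IsClosed {q : M × M | q.2 ∈ WsLoc f ε q.1} := by
  simp only [WsLoc, mem_ofPred_eq]
  simp only [ofPred_forall]
  exact isClosed_iInter fun k => isClosed_iInter fun _ => isClosed_le
    (((continuous_iterZ f k).comp continuous_fst).dist ((continuous_iterZ f k).comp continuous_snd))
    continuous_const

theorem isClosed_setOf_mem_WuLoc (f : M ≃ₜ M) (ε : ℝ) :
    IsClosed {q : M × M | q.2 ∈ WuLoc f ε q.1} := by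
  simpa only [WsLoc_symm] using isClosed_setOf_mem_WsLoc f.symm ε

theorem isClosed_WsLoc : IsClosed (WsLoc f ε p) :=
  (isClosed_setOf_mem_WsLoc f ε).preimage (Continuous.prodMk_right p)

theorem isClosed_WuLoc : IsClosed (WuLoc f ε p) :=
  (isClosed_setOf_mem_WuLoc f ε).preimage (Continuous.prodMk_right p)

theorem iterZ_mem_Ws_iff {k : ℤ} : iterZ f k y ∈ Ws f (iterZ f k d) ↔ y ∈ Ws f d := by
  conv_rhs => rw [Ws, mem_ofPred_eq, ← map_add_atTop_eq k, tendsto_map'_iff]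
  simp only [Ws, mem_ofPred_eq, ← iterZ_add, Function.comp_def]

theorem mem_Ws_of_tendsto_iterate (hl : 0 < l) (hd : iterZ f l d = d)
    (h : Tendsto (fun m => (iterZ f l)^[m] y) atTop (𝓝 d)) : y ∈ Ws f d := by
  have hl' : (0 : ℤ) < l := mod_cast hl
  have hsum : Tendsto (fun m => ∑ i ∈ Finset.range l,
      dist (iterZ f i d) (iterZ f i ((iterZ f l)^[m] y))) atTop (𝓝 0) := by
    have hterm (i : ℕ) : Tendsto (fun m => dist (iterZ f i d) (iterZ f i ((iterZ f l)^[m] y)))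
        atTop (𝓝 0) := by
      simpa only [dist_self, Function.comp_apply] using
        (tendsto_const_nhds (x := iterZ f i d)).dist (((continuous_iterZ f i).tendsto d).comp h)
    simpa only [Finset.sum_const_zero] using tendsto_finsetSum _ fun i _ => hterm i
  have hquot : Tendsto (fun j : ℤ => (j / l).toNat) atTop atTop := by
    refine tendsto_atTop.2 fun m => (eventually_ge_atTop (l * m : ℤ)).mono fun j hj => ?_
    have hmj : (m : ℤ) ≤ j / l := (Int.le_ediv_iff_mul_le hl').2 (by rwa [mul_comm])
    omega
  refine squeeze_zero' (.of_forall fun _ => dist_nonneg) ?_ (hsum.comp hquot)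
  filter_upwards [eventually_ge_atTop 0] with j hj
  have hmod : (((j % l).toNat : ℕ) : ℤ) = j % l := Int.toNat_of_nonneg (Int.emod_nonneg j hl'.ne')
  have hdiv : (((j / l).toNat : ℕ) : ℤ) = j / l := Int.toNat_of_nonneg (Int.ediv_nonneg hj hl'.le)
  have hj' (z : M) : iterZ f j z = iterZ f (j % l) (iterZ f (l * (j / l)) z) := by
    rw [← iterZ_add, Int.emod_add_mul_ediv]
  have hmem : (j % l).toNat ∈ Finset.range l := by
    have := Int.emod_lt_of_pos j hl'
    rw [Finset.mem_range]
    omega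
  refine le_trans (le_of_eq ?_) (Finset.single_le_sum (fun _ _ => dist_nonneg) hmem)
  rw [iterate_iterZ, hmod, hdiv, hj' d, hj' y, iterZ_mul_of_fixed hd]

theorem isOpen_Ws_of_mem_nhds (hl : 0 < l) (hd : iterZ f l d = d) (h : Ws f d ∈ 𝓝 d) :
    IsOpen (Ws f d) := by
  refine isOpen_iff_mem_nhds.2 fun y hy => ?_
  have hper : Tendsto (fun m : ℕ => (l * m : ℤ)) atTop atTop :=
    tendsto_natCast_atTop_atTop.const_mul_atTop' (mod_cast hl)
  have hlim : Tendsto (fun m : ℕ => iterZ f (l * m) y) atTop (𝓝 d) := by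
    refine tendsto_iff_dist_tendsto_zero.2 ((hy.comp hper).congr fun m => ?_)
    rw [Function.comp_apply, iterZ_mul_of_fixed hd, dist_comm]
  obtain ⟨m, hm⟩ := (hlim.eventually (eventually_mem_nhds_iff.2 h)).exists
  filter_upwards [(continuous_iterZ f (l * m)).continuousAt hm] with z hz
  refine iterZ_mem_Ws_iff.1 (?_ : iterZ f (l * m) z ∈ Ws f (iterZ f (l * m) d))
  rwa [iterZ_mul_of_fixed hd]

end StableSets

section Expansive

variable {f : M ≃ₜ M} {α ε : ℝ} {a b d y : M} {l : ℕ}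

theorem IsExpansive.anti (hexp : IsExpansive f α) (h : ε ≤ α) : IsExpansive f ε :=
  fun a b hab => (hexp a b hab).imp fun _ hk => h.trans_lt hk

theorem IsExpansive.eq_of_forall_dist_le (hexp : IsExpansive f α)
    (h : ∀ k, dist (iterZ f k a) (iterZ f k b) ≤ α) : a = b := by
  by_contra hab
  obtain ⟨k, hk⟩ := hexp a b hab
  exact (h k).not_gt hk

theorem IsExpansive.eq_of_mem_WsLoc_of_mem_WuLoc (hexp : IsExpansive f α) (hs : b ∈ WsLoc f α a)
    (hu : b ∈ WuLoc f α a) : a = b :=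
  hexp.eq_of_forall_dist_le fun k => (le_total 0 k).elim (hs k) (hu k)

theorem IsExpansive.WsLoc_subset_Ws [CompactSpace M] (hexp : IsExpansive f α) :
    WsLoc f α a ⊆ Ws f a := by
  refine fun y hy => (tendsto_iff_ultrafilter _ _ _).2 fun g hg => ?_
  -- A limit `q` of the pairs `(f ^ k a, f ^ k y)` stays `α`-close to the diagonal under every
  -- iterate, hence lies on it.
  obtain ⟨q, hq⟩ : ∃ q : M × M, Tendsto (fun k => (iterZ f k a, iterZ f k y)) g (𝓝 q) :=
    ⟨_, (g.map fun k => (iterZ f k a, iterZ f k y)).le_nhds_lim⟩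
  have hqa : Tendsto (fun k => iterZ f k a) g (𝓝 q.1) := hq.fst_nhds
  have hqy : Tendsto (fun k => iterZ f k y) g (𝓝 q.2) := hq.snd_nhds
  have hdiag : q.1 = q.2 := hexp.eq_of_forall_dist_le fun j =>
    le_of_tendsto ((((continuous_iterZ f j).tendsto _).comp hqa).dist
      (((continuous_iterZ f j).tendsto _).comp hqy)) <| hg <| by
      filter_upwards [eventually_ge_atTop (-j)] with k hk
      simp only [Function.comp_apply, ← iterZ_add]
      exact hy _ (by linarith)
  simpa only [hdiag, dist_self] using hqa.dist hqy

theorem IsExpansive.eventually_notMem_WuLoc (hexp : IsExpansive f α) (hl : 0 < l)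
    (hd : iterZ f l d = d) (hyd : y ≠ d) : ∀ᶠ m : ℕ in atTop, iterZ f (l * m) y ∉ WuLoc f α d := by
  obtain ⟨k, hk⟩ := hexp d y hyd.symm
  have hper : Tendsto (fun m : ℕ => (l * m : ℤ)) atTop atTop :=
    tendsto_natCast_atTop_atTop.const_mul_atTop' (mod_cast hl)
  filter_upwards [hper.eventually_ge_atTop k] with m hm hmem
  have hclose := hmem (k - l * m) (by linarith)
  rw [← iterZ_add, sub_add_cancel] at hclose
  have hshift : iterZ f (k - l * m) d = iterZ f k d := by
    rw [← congrArg (iterZ f _) (iterZ_mul_of_fixed hd m), ← iterZ_add, sub_add_cancel]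
  exact hclose.not_gt (hshift ▸ hk)

end Expansive

/-! ### Hyperbolic periodic points -/

section Linearization

variable {f : M ≃ₜ M} {n r : ℕ} {d : M}

theorem exists_openPartialHomeomorph {X Y : Type*} [TopologicalSpace X] [TopologicalSpace Y]
    {U : Set X} {V : Set Y} [Nonempty U] (hU : IsOpen U) (hV : IsOpen V) (h : U ≃ₜ V) :
    ∃ e : OpenPartialHomeomorph X Y, e.source = U ∧ e.target = V ∧ ∀ u : U, e u = h u := by
  have hval : IsOpenEmbedding (fun u => h u : U → Y) :=
    hV.isOpenEmbedding_subtypeVal.comp h.isOpenEmbedding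
  let incl := hU.isOpenEmbedding_subtypeVal.toOpenPartialHomeomorph (Subtype.val : U → X)
  let e := incl.symm.trans (hval.toOpenPartialHomeomorph _)
  refine ⟨e, by simp [e, incl], ?_, fun u => ?_⟩
  · have hrange : range (fun u => h u : U → Y) = V :=
      (h.surjective.range_comp Subtype.val).trans Subtype.range_coe
    simpa [e, incl] using hrange
  · have hu : incl.symm u = u := incl.left_inv (mem_univ u)
    simp [e, hu]

theorem exists_linearization (hd : d ∈ PerHr f n r) :
    ∃ l : ℕ, 0 < l ∧ ∃ e : OpenPartialHomeomorph (ModelSp n r) M,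
      0 ∈ e.source ∧ e 0 = d ∧ ∀ᶠ v in 𝓝 0, iterZ f l (e v) = e (modelL n r v) := by
  obtain ⟨l, hl, hper, U, V, h, hU, hV, h0, hdU, hd0, hconj⟩ := hd
  rw [← iterZ_natCast] at hper hconj
  have : Nonempty U := ⟨⟨d, hdU⟩⟩
  obtain ⟨e, rfl, rfl, he⟩ := exists_openPartialHomeomorph hU hV h
  have hed : e d = 0 := (he ⟨d, hdU⟩).trans hd0
  have hed' : e.symm 0 = d := hed ▸ e.left_inv hdU
  refine ⟨l, hl, e.symm, h0, hed', ?_⟩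
  have hcont : ContinuousAt (fun v => iterZ f l (e.symm v)) 0 :=
    (continuous_iterZ f l).continuousAt.comp (e.continuousAt_symm h0)
  have hU0 : e.source ∈ 𝓝 (iterZ f l (e.symm 0)) := by
    rw [hed', hper]
    exact hU.mem_nhds hdU
  filter_upwards [hV.mem_nhds h0, hcont.eventually_mem hU0] with v hv hlv
  have hv' : e.symm v ∈ e.source := e.map_target hv
  rw [← e.left_inv hlv, he ⟨_, hlv⟩, hconj _ hv' hlv, ← he ⟨_, hv'⟩, e.right_inv hv]

end Linearization

section Contraction

variable {f : M ≃ₜ M} {E : Type*} [NormedAddCommGroup E] [NormedSpace ℝ E] {g : E → M} {l : ℕ}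
  {s : ℝ} {v : E}

theorem mem_Ws_of_contraction (hl : 0 < l) (hg0 : ContinuousAt g 0)
    (hg : ∀ v ∈ closedBall 0 s, iterZ f l (g v) = g ((2 : ℝ)⁻¹ • v)) (hv : v ∈ closedBall 0 s) :
    g v ∈ Ws f (g 0) := by
  have hs : 0 ≤ s := (norm_nonneg v).trans (mem_closedBall_zero_iff.1 hv)
  have hfix : iterZ f l (g 0) = g 0 := by simpa using hg 0 (mem_closedBall_self hs)
  have hpow (m : ℕ) : ((2 : ℝ)⁻¹ ^ m) • v ∈ closedBall 0 s := by
    rw [mem_closedBall_zero_iff, norm_smul] at *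
    refine (mul_le_of_le_one_left (norm_nonneg v) ?_).trans hv
    simpa using pow_le_one₀ (by norm_num) (by norm_num : (2 : ℝ)⁻¹ ≤ 1)
  have hiter (m : ℕ) : (iterZ f l)^[m] (g v) = g (((2 : ℝ)⁻¹ ^ m) • v) := by
    induction m with
    | zero => simp
    | succ m ih => rw [Function.iterate_succ_apply', ih, hg _ (hpow m), smul_smul, ← pow_succ']
  have hlim : Tendsto (fun m : ℕ => ((2 : ℝ)⁻¹ ^ m) • v) atTop (𝓝 0) := by
    simpa using (tendsto_pow_atTop_nhds_zero_of_lt_one (r := (2 : ℝ)⁻¹) (by norm_num)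
      (by norm_num)).smul_const v
  exact mem_Ws_of_tendsto_iterate hl hfix ((hg0.tendsto.comp hlim).congr fun m => (hiter m).symm)

end Contraction

section Hyperbolic

variable {f : M ≃ₜ M} {n r : ℕ} {d : M} {ε : ℝ}

theorem modelL_self (v : ModelSp n n) : modelL n n v = (2 : ℝ)⁻¹ • v :=
  Prod.ext (funext fun i => div_eq_inv_mul _ _) (funext fun i => absurd i.isLt (by lia))

theorem modelL_unstable (t : ℝ) : modelL n r (0, fun _ => (2 : ℝ)⁻¹ * t) = (0, fun _ => t) :=
  Prod.ext (funext fun _ => zero_div _) (funext fun _ => mul_inv_cancel_left₀ two_ne_zero t)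

theorem isOpen_Ws_of_mem_PerHr_self (hd : d ∈ PerHr f n n) : IsOpen (Ws f d) := by
  obtain ⟨l, hl, e, h0, rfl, he⟩ := exists_linearization hd
  obtain ⟨s, hs, hes⟩ := nhds_basis_closedBall.eventually_iff.1 he
  simp only [modelL_self] at hes
  refine isOpen_Ws_of_mem_nhds hl (by simpa using hes (mem_closedBall_self hs.le)) ?_
  refine mem_of_superset (e.image_mem_nhds h0 (closedBall_mem_nhds 0 hs)) ?_
  rintro _ ⟨v, hv, rfl⟩
  exact mem_Ws_of_contraction hl (e.continuousAt h0) (fun v hv => hes hv) hv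

theorem exists_local_unstable_arc (hd : d ∈ PerHr f n r) (hr : r < n) :
    ∃ l : ℕ, 0 < l ∧ ∃ s > 0, ∃ g : ℝ → M, ContinuousOn g (closedBall 0 s) ∧
      InjOn g (closedBall 0 s) ∧ g 0 = d ∧
      ∀ t ∈ closedBall (0 : ℝ) s, iterZ f l (g ((2 : ℝ)⁻¹ * t)) = g t := by
  obtain ⟨l, hl, e, h0, he0, he⟩ := exists_linearization hd
  let u : ℝ → ModelSp n r := fun t => (0, fun _ => t)
  have hu : Continuous u := by fun_prop
  have hev : ∀ᶠ t in 𝓝 (0 : ℝ), u t ∈ e.source ∧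
      iterZ f l (e (u ((2 : ℝ)⁻¹ * t))) = e (u t) := by
    have huc : Continuous fun t : ℝ => u ((2 : ℝ)⁻¹ * t) := by fun_prop
    have hhalf := huc.tendsto' 0 0 (by simp only [u, mul_zero]; rfl)
    filter_upwards [hu.continuousAt (e.open_source.mem_nhds h0), hhalf.eventually he]
      with t ht het
    exact ⟨ht, by rw [het, modelL_unstable]⟩
  obtain ⟨s, hs, hes⟩ := nhds_basis_closedBall.eventually_iff.1 hev
  refine ⟨l, hl, s, hs, e ∘ u, e.continuousOn.comp hu.continuousOn fun t ht => (hes ht).1,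
    e.injOn.comp (fun a _ b _ hab => ?_) fun t ht => (hes ht).1, he0, fun t ht => (hes ht).2⟩
  exact congrFun (congrArg Prod.snd hab) ⟨0, Nat.sub_pos_of_lt hr⟩

-- Push a small unstable arc forward until expansivity makes both of its ends leave.
theorem exists_arc_subset_Wu (hexp : IsExpansive f ε) (hd : d ∈ PerHr f n r) (hr : r < n) :
    ∃ s > 0, ∃ γ : ℝ → M, ContinuousOn γ (closedBall 0 s) ∧ InjOn γ (closedBall 0 s) ∧ γ 0 = d ∧
      MapsTo γ (closedBall 0 s) (Wu f d) ∧ γ s ∉ WuLoc f ε d ∧ γ (-s) ∉ WuLoc f ε d := by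
  obtain ⟨l, hl, s, hs, g, hgc, hgi, rfl, hg⟩ := exists_local_unstable_arc hd hr
  have h0 : (0 : ℝ) ∈ closedBall 0 s := mem_closedBall_self hs.le
  have hsmem : s ∈ closedBall (0 : ℝ) s := by simp [abs_of_pos hs]
  have hsmem' : -s ∈ closedBall (0 : ℝ) s := by simp [abs_of_pos hs]
  have hfix : iterZ f l (g 0) = g 0 := by simpa using hg 0 h0
  have hcontr : ∀ t ∈ closedBall (0 : ℝ) s, iterZ f.symm l (g t) = g ((2 : ℝ)⁻¹ • t) := by
    intro t ht
    rw [← hg t ht, iterZ_symm, ← iterZ_add, neg_add_cancel]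
    rfl
  have hWu : ∀ t ∈ closedBall (0 : ℝ) s, g t ∈ Wu f (g 0) := fun t ht =>
    Ws_symm (f := f) ▸
      mem_Ws_of_contraction hl (hgc.continuousAt (closedBall_mem_nhds 0 hs)) hcontr ht
  obtain ⟨m, hm, hm'⟩ := ((hexp.eventually_notMem_WuLoc hl hfix
    (hgi.ne hsmem h0 hs.ne')).and (hexp.eventually_notMem_WuLoc hl hfix
    (hgi.ne hsmem' h0 (neg_ne_zero.2 hs.ne')))).exists
  refine ⟨s, hs, fun t => iterZ f (l * m) (g t), (continuous_iterZ f _).comp_continuousOn hgc,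
    (injective_iterZ f _).comp_injOn hgi, iterZ_mul_of_fixed hfix m, fun t ht => ?_, hm, hm'⟩
  have hmem := (iterZ_mem_Ws_iff (f := f.symm) (k := -(l * m))).2 (Ws_symm (f := f) ▸ hWu t ht)
  rwa [iterZ_symm, iterZ_symm, neg_neg, iterZ_mul_of_fixed hfix, Ws_symm] at hmem

end Hyperbolic

section Escape

theorem exists_first_hit {h : ℝ → ℝ} {a b c : ℝ} (hab : a ≤ b) (hh : ContinuousOn h (Icc a b))
    (ha : h a ≤ c) (hb : c ≤ h b) : ∃ τ ∈ Icc a b, h τ = c ∧ ∀ t ∈ Icc a τ, h t ≤ c := by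
  have hcpt : IsCompact (Icc a b ∩ h ⁻¹' {c}) := isCompact_Icc.of_isClosed_subset
    (hh.preimage_isClosed_of_isClosed isClosed_Icc isClosed_singleton) inter_subset_left
  obtain ⟨τ, ⟨hτ, hτc⟩, hmin⟩ :=
    hcpt.exists_isLeast (intermediate_value_Icc hab hh ⟨ha, hb⟩)
  refine ⟨τ, hτ, hτc, fun t ht => ?_⟩
  by_contra! hct
  have htb : t ≤ b := ht.2.trans hτ.2
  obtain ⟨u, hu, huc⟩ :=
    intermediate_value_Icc ht.1 (hh.mono (Icc_subset_Icc_right htb)) ⟨ha, hct.le⟩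
  have hτu : τ ≤ u := hmin ⟨⟨hu.1, hu.2.trans htb⟩, huc⟩
  rw [le_antisymm ht.2 (hτu.trans hu.2), hτc] at hct
  exact hct.false

variable {f : M ≃ₜ M} {n r : ℕ} {d w x : M} {c s ε ν : ℝ}

theorem exists_subarc_subset {γ : ℝ → M} {A : Set M} (hU : UpSet f x ν d ⊆ A)
    (hdc : dist d w ≤ c) (hball : closedBall w c ⊆ ball x ν) (hs : 0 ≤ s)
    (hγ : ContinuousOn γ (Icc 0 s)) (h0 : γ 0 = d) (hWu : MapsTo γ (Icc 0 s) (Wu f d))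
    (hγs : γ s ∉ A) :
    ∃ τ ∈ Icc 0 s, dist (γ τ) w = c ∧ γ '' Icc 0 τ ⊆ A ∩ closedBall w c := by
  have hsub : ∀ τ ∈ Icc 0 s, γ '' Icc 0 τ ⊆ closedBall w c → γ '' Icc 0 τ ⊆ A := by
    intro τ hτ hτc
    have hmono : Icc 0 τ ⊆ Icc 0 s := Icc_subset_Icc_right hτ.2
    exact ((isPreconnected_Icc.image γ (hγ.mono hmono)).subset_connectedComponentIn
      ⟨0, left_mem_Icc.2 hτ.1, h0⟩
      (subset_inter (hWu.mono_left hmono).image_subset (hτc.trans hball))).trans hU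
  obtain ⟨t, ht, htc⟩ : ∃ t ∈ Icc 0 s, c ≤ dist (γ t) w := by
    by_contra! hlt
    exact hγs (hsub s (right_mem_Icc.2 hs) (image_subset_iff.2 fun t ht => (hlt t ht).le)
      (mem_image_of_mem γ (right_mem_Icc.2 hs)))
  have hdist : ContinuousOn (fun t => dist (γ t) w) (Icc 0 t) :=
    (continuous_id.dist continuous_const).comp_continuousOn (hγ.mono (Icc_subset_Icc_right ht.2))
  obtain ⟨τ, hτ, hτc, hle⟩ := exists_first_hit ht.1 hdist (by rwa [h0]) htc
  have hτs : τ ∈ Icc 0 s := ⟨hτ.1, hτ.2.trans ht.2⟩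
  have hτball : γ '' Icc 0 τ ⊆ closedBall w c := image_subset_iff.2 hle
  exact ⟨τ, hτs, hτc, subset_inter (hsub τ hτs hτball) hτball⟩

-- An unstable arc through `d` leaves the ball at both ends. As `S` meets the local unstable set at
-- most once, and not at `d`, one of the two halves of the arc misses `S`.
theorem exists_isPreconnected_disjoint (hexp : IsExpansive f ε) (hd : d ∈ PerHr f n r) (hr : r < n)
    (hU : UpSet f x ν d ⊆ WuLoc f ε d) (hdc : dist d w ≤ c) (hball : closedBall w c ⊆ ball x ν)
    {S : Set M} (hdS : d ∉ S) (hS : (S ∩ WuLoc f ε d).Subsingleton) :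
    ∃ P, IsPreconnected P ∧ d ∈ P ∧ P ⊆ WuLoc f ε d ∩ closedBall w c ∧ Disjoint P S ∧
      ∃ y ∈ P, dist y w = c := by
  obtain ⟨s, hs, γ, hγ, hinj, h0, hWu, hend, hend'⟩ := exists_arc_subset_Wu hexp hd hr
  have hpos : Icc 0 s ⊆ closedBall (0 : ℝ) s := fun t ht => by
    simpa [abs_of_nonneg ht.1] using ht.2
  have hneg : MapsTo Neg.neg (Icc 0 s) (closedBall (0 : ℝ) s) := fun t ht => by
    simpa [abs_of_nonneg ht.1] using ht.2
  obtain ⟨τ, hτ, hτc, hτU⟩ := exists_subarc_subset hU hdc hball hs.le (hγ.mono hpos) h0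
    (hWu.mono_left hpos) hend
  obtain ⟨τ', hτ', hτc', hτU'⟩ := exists_subarc_subset (γ := γ ∘ Neg.neg) hU hdc hball hs.le
    (hγ.comp continuous_neg.continuousOn hneg) (by simpa using h0) (hWu.comp hneg) hend'
  have hmono : Icc 0 τ ⊆ Icc 0 s := Icc_subset_Icc_right hτ.2
  have hmono' : Icc 0 τ' ⊆ Icc 0 s := Icc_subset_Icc_right hτ'.2
  by_cases hdisj : Disjoint (γ '' Icc 0 τ) S
  · exact ⟨_, isPreconnected_Icc.image γ (hγ.mono (hmono.trans hpos)),
      ⟨0, left_mem_Icc.2 hτ.1, h0⟩, hτU, hdisj, γ τ, ⟨τ, right_mem_Icc.2 hτ.1, rfl⟩, hτc⟩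
  refine ⟨_, isPreconnected_Icc.image (γ ∘ Neg.neg) (hγ.comp continuous_neg.continuousOn
    (hneg.mono_left hmono')), ⟨0, left_mem_Icc.2 hτ'.1, by simpa using h0⟩, hτU', ?_, γ (-τ'),
    ⟨τ', right_mem_Icc.2 hτ'.1, rfl⟩, hτc'⟩
  obtain ⟨_, ⟨a, ha, rfl⟩, haS⟩ := not_disjoint_iff.1 hdisj
  refine disjoint_left.2 ?_
  rintro _ ⟨b, hb, rfl⟩ hbS
  have hab : a = -b := hinj (hpos (hmono ha)) (hneg (hmono' hb))
    (hS ⟨haS, (hτU ⟨a, ha, rfl⟩).1⟩ ⟨hbS, (hτU' ⟨b, hb, rfl⟩).1⟩)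
  have ha0 : a = 0 := by linarith [ha.1, hb.1]
  exact hdS (h0 ▸ ha0 ▸ haS)

end Escape

/-! ### Umbrellas -/

section Plaques

variable {f : M ≃ₜ M} {n : ℕ} {x p y : M} {ν ε : ℝ}

/-- Condition (i): near `x` the plaques `S_p` and `U_p` of the hyperbolic periodic points lie in the
local stable and unstable sets. -/
def HasLocalPlaques (f : M ≃ₜ M) (n : ℕ) (x : M) (ν ε : ℝ) : Prop :=
  ∀ p ∈ PerH f n ∩ ball x ν, SpSet f x ν p ⊆ WsLoc f ε p ∧ UpSet f x ν p ⊆ WuLoc f ε p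

theorem mem_SpSet_self (hp : p ∈ ball x ν) : p ∈ SpSet f x ν p :=
  mem_connectedComponentIn ⟨mem_Ws_self, hp⟩

theorem SpSet_subset : SpSet f x ν p ⊆ Ws f p ∩ ball x ν := connectedComponentIn_subset _ _

theorem SpSet_subset_ball : SpSet f x ν p ⊆ ball x ν := SpSet_subset.trans inter_subset_right

theorem SpSet_eq_of_mem (hy : y ∈ SpSet f x ν p) : SpSet f x ν y = SpSet f x ν p := by
  rw [SpSet, Ws_eq_of_mem (SpSet_subset hy).1]
  exact (connectedComponentIn_eq hy).symm

theorem SpSet_eq_or_disjoint (p q : M) :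
    SpSet f x ν p = SpSet f x ν q ∨ Disjoint (SpSet f x ν p) (SpSet f x ν q) := by
  refine or_iff_not_imp_right.2 fun hpq => ?_
  obtain ⟨y, hyp, hyq⟩ := not_disjoint_iff.1 hpq
  rw [← SpSet_eq_of_mem hyp, SpSet_eq_of_mem hyq]

theorem isOpen_ball_sdiff_SpSet [CompactSpace M] (hexp : IsExpansive f ε) (hp : p ∈ ball x ν)
    (hloc : SpSet f x ν p ⊆ WsLoc f ε p) : IsOpen (ball x ν \ SpSet f x ν p) := by
  have hcl : closure (SpSet f x ν p) ⊆ Ws f p :=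
    (closure_minimal hloc isClosed_WsLoc).trans hexp.WsLoc_subset_Ws
  have hpre : IsPreconnected (closure (SpSet f x ν p) ∩ ball x ν) :=
    isPreconnected_connectedComponentIn.subset_closure
      (subset_inter subset_closure SpSet_subset_ball) inter_subset_left
  have hsub : closure (SpSet f x ν p) ∩ ball x ν ⊆ SpSet f x ν p :=
    hpre.subset_connectedComponentIn ⟨subset_closure (mem_SpSet_self hp), hp⟩
      (inter_subset_inter_left _ hcl)
  convert isOpen_ball.sdiff (isClosed_closure (s := SpSet f x ν p)) using 1
  exact Subset.antisymm (fun y hy => ⟨hy.1, fun hyc => hy.2 (hsub ⟨hyc, hy.1⟩)⟩)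
    (sdiff_subset_sdiff_right subset_closure)

theorem PerHr_subset_PerH {r : ℕ} (hr : r ≤ n) : PerHr f n r ⊆ PerH f n :=
  subset_biUnion_of_mem (u := PerHr f n) (Finset.mem_range_succ_iff.2 hr)

end Plaques

section Chains

variable {f : M ≃ₜ M} {n : ℕ} {x d w z : M} {ν δ ε c : ℝ} {C : Set M}

theorem IsChainIn.subset_PerH_inter_ball (hC : IsChainIn f n x ν δ C) (hδ : δ ≤ ν) :
    C ⊆ PerH f n ∩ ball x ν :=
  hC.1.trans (inter_subset_inter (PerHr_subset_PerH (n.sub_le 1)) (ball_subset_ball hδ))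

theorem notMem_SpSet_of_mem_frontier
    (hz : z ∈ frontier (closure (⋃ q ∈ C, ShatSet f x ν q))) (hzx : z ∈ ball x ν) :
    ∀ q ∈ C, x ∉ SpSet f x ν q := by
  intro q hq hxq
  have hfull : ball x ν ⊆ ⋃ q ∈ C, ShatSet f x ν q :=
    (filling_eq_of_mem hxq).symm.subset.trans
      (subset_biUnion_of_mem (u := fun q => ShatSet f x ν q) hq)
  exact hz.2 (interior_maximal (hfull.trans subset_closure) isOpen_ball hzx)

variable [CompactSpace M]

theorem IsChainIn.isUmbrellaChain (hC : IsChainIn f n x ν δ C) (hδ : δ ≤ ν)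
    (hexp : IsExpansive f ε) (hi : HasLocalPlaques f n x ν ε) (hacc : x ∈ closure C)
    (hx : ∀ q ∈ C, x ∉ SpSet f x ν q) :
    IsUmbrellaChain (ball x ν) x fun q : C => SpSet f x ν q where
  isOpen := isOpen_ball
  mem := by
    obtain ⟨q, hq⟩ := closure_nonempty_iff.1 ⟨x, hacc⟩
    exact mem_ball_self (pos_of_mem_ball (hC.subset_PerH_inter_ball hδ hq).2)
  subset _ := SpSet_subset_ball
  notMem q := hx q q.2
  isPreconnected _ := isPreconnected_connectedComponentIn
  isOpen_sdiff q :=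
    have hq := hC.subset_PerH_inter_ball hδ q.2
    isOpen_ball_sdiff_SpSet hexp hq.2 (hi q hq).1
  eq_or_disjoint p q := SpSet_eq_or_disjoint p.1 q.1
  total p q := hC.2 p p.2 q q.2
  accumulates U hU := by
    obtain ⟨q, hqU, hqC⟩ := mem_closure_iff_nhds.1 hacc U hU
    exact ⟨⟨q, hqC⟩, q, mem_SpSet_self (hC.subset_PerH_inter_ball hδ hqC).2, hqU⟩

variable [LocallyConnectedSpace M]

-- The plaque of an attracting point is clopen in the ball, so outside the umbrella of `q` it would
-- spread to `x`, and the chain would run into it.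
theorem mem_ShatSet_of_mem_PerHr_self
    (hS : IsUmbrellaChain (ball x ν) x fun q : C => SpSet f x ν q)
    (hexp : IsExpansive f ε) (hi : HasLocalPlaques f n x ν ε) (hd : d ∈ PerHr f n n)
    (hdx : d ∈ ball x ν) (q : C) : d ∈ ShatSet f x ν q := by
  by_contra hdq
  have hopen : IsOpen (SpSet f x ν d) :=
    ((isOpen_Ws_of_mem_PerHr_self hd).inter isOpen_ball).connectedComponentIn
  have hopen' : IsOpen (ball x ν \ SpSet f x ν d) :=
    isOpen_ball_sdiff_SpSet hexp hdx (hi d ⟨PerHr_subset_PerH le_rfl hd, hdx⟩).1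
  have hpre : IsPreconnected (ball x ν \ filling (ball x ν) (SpSet f x ν q) x) := by
    rw [sdiff_filling]
    exact isPreconnected_connectedComponentIn
  have hsub : ball x ν \ ShatSet f x ν q ⊆ SpSet f x ν d :=
    hpre.subset_left_of_subset_union hopen hopen' disjoint_sdiff_right
      (sdiff_subset.trans (sdiff_subset_iff.1 Subset.rfl)) ⟨d, ⟨hdx, hdq⟩, mem_SpSet_self hdx⟩
  have hxd : x ∈ SpSet f x ν d := hsub ⟨hS.mem, notMem_filling_self hS.mem (hS.notMem q)⟩
  obtain ⟨p, hp⟩ := hS.accumulates _ (hopen.mem_nhds hxd)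
  have heq : SpSet f x ν p = SpSet f x ν d :=
    (SpSet_eq_or_disjoint p.1 d).resolve_right (not_disjoint_iff_nonempty_inter.2 hp)
  exact hS.notMem p (heq ▸ hxd)

theorem exists_mem_WuLoc_notMem_ShatSet
    (hS : IsUmbrellaChain (ball x ν) x fun q : C => SpSet f x ν q) (hC : C ⊆ PerH f n ∩ ball x ν)
    (hε : 0 ≤ ε) (hexp : IsExpansive f (2 * ε)) (hi : HasLocalPlaques f n x ν ε)
    (hball : closedBall w c ⊆ ball x ν) (hd : d ∈ PerH f n) (hdc : dist d w ≤ c) (q : C)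
    (hdq : d ∉ ShatSet f x ν q) : ∃ y ∈ WuLoc f ε d, dist y w = c ∧ y ∉ ShatSet f x ν q := by
  have hexp' : IsExpansive f ε := hexp.anti (by linarith)
  have hdx : d ∈ ball x ν := hball hdc
  have hsing : (SpSet f x ν q ∩ WuLoc f ε d).Subsingleton := fun a ha b hb =>
    have hq : SpSet f x ν q ⊆ WsLoc f ε q := (hi q (hC q.2)).1
    hexp.eq_of_mem_WsLoc_of_mem_WuLoc (mem_WsLoc_two_mul (hq ha.1) (hq hb.1))
      (mem_WuLoc_two_mul ha.2 hb.2)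
  obtain ⟨r, hr, hdr⟩ := mem_iUnion₂.1 hd
  have hrn : r < n := by
    refine (Finset.mem_range_succ_iff.1 hr).lt_of_ne ?_
    rintro rfl
    exact hdq (mem_ShatSet_of_mem_PerHr_self hS hexp' hi hdr hdx q)
  obtain ⟨P, hP, hdP, hPsub, hPS, y, hyP, hyc⟩ := exists_isPreconnected_disjoint hexp' hdr hrn
    (hi d ⟨hd, hdx⟩).2 hdc hball (fun hdS => hdq (subset_filling SpSet_subset_ball hdS)) hsing
  exact ⟨y, (hPsub hyP).1, hyc, disjoint_left.1 (disjoint_filling_of_isPreconnected hP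
    (hPsub.trans (inter_subset_right.trans hball)) hPS hdP hdq) hyP⟩

theorem exists_mem_WuLoc_notMem_interior_ShatSet
    (hS : IsUmbrellaChain (ball x ν) x fun q : C => SpSet f x ν q) (hC : C ⊆ PerH f n ∩ ball x ν)
    (hε : 0 ≤ ε) (hexp : IsExpansive f (2 * ε)) (hi : HasLocalPlaques f n x ν ε)
    (hdense : Dense (PerH f n)) (hc : 0 < c) (hball : closedBall w c ⊆ ball x ν) (q : C)
    (hwq : w ∉ ShatSet f x ν q) :
    ∃ y ∈ WuLoc f ε w, dist y w = c ∧ y ∉ interior (ShatSet f x ν q) := by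
  let G : Set (M × M) := {a | a.2 ∈ WuLoc f ε a.1 ∧ dist a.2 w = c ∧
    a.2 ∉ interior (ShatSet f x ν q)}
  have hG : IsClosed G := (isClosed_setOf_mem_WuLoc f ε).inter
    ((isClosed_eq (continuous_snd.dist continuous_const) continuous_const).inter
      (isOpen_interior.isClosed_compl.preimage continuous_snd))
  let W : Set M := ball w c ∩ (ball x ν \ ShatSet f x ν q)
  have hW : IsOpen W := isOpen_ball.inter (isOpen_sdiff_filling (hS.isOpen_sdiff q))
  have hWG : W ∩ PerH f n ⊆ Prod.fst '' G := by
    rintro d ⟨⟨hdw, -, hdq⟩, hd⟩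
    obtain ⟨y, hy, hyc, hyq⟩ :=
      exists_mem_WuLoc_notMem_ShatSet hS hC hε hexp hi hball hd (mem_ball.1 hdw).le q hdq
    exact ⟨(d, y), ⟨hy, hyc, fun hyi => hyq (interior_subset hyi)⟩, rfl⟩
  have hwW : w ∈ W := ⟨mem_ball_self hc, hball (mem_closedBall_self hc.le), hwq⟩
  obtain ⟨⟨w', y⟩, hy, rfl⟩ := closure_minimal hWG (isClosedMap_fst_of_compactSpace G hG)
    (hdense.open_subset_closure_inter hW hwW)
  exact ⟨y, hy⟩

theorem interior_closure_iUnion_ShatSet_inter_ball_subset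
    (hS : IsUmbrellaChain (ball x ν) x fun q : C => SpSet f x ν q) (hC : C ⊆ PerH f n ∩ ball x ν)
    (hε : 0 ≤ ε) (hexp : IsExpansive f (2 * ε)) (hi : HasLocalPlaques f n x ν ε)
    (hdense : Dense (PerH f n)) :
    interior (closure (⋃ q : C, ShatSet f x ν q)) ∩ ball x ν ⊆ ⋃ q : C, ShatSet f x ν q := by
  rintro w ⟨hwi, hwx⟩
  by_contra hw
  obtain ⟨c, hc, hcsub⟩ := nhds_basis_closedBall.mem_iff.1
    (inter_mem (isOpen_interior.mem_nhds hwi) (isOpen_ball.mem_nhds hwx))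
  have hcball : closedBall w c ⊆ ball x ν := hcsub.trans inter_subset_right
  have hsub : ∀ y ∈ closedBall w c, y ∈ ball x ν ∩ closure (⋃ q : C, ShatSet f x ν q) :=
    fun y hy => ⟨(hcsub hy).2, interior_subset (hcsub hy).1⟩
  have hpairs : ∀ q : C, SpSet f x ν q ×ˢ SpSet f x ν q ⊆
      {a : M × M | a.2 ∈ WsLoc f (2 * ε) a.1} := fun q a ha =>
    have hq := (hi q (hC q.2)).1
    mem_WsLoc_two_mul (hq ha.1) (hq ha.2)
  have hKsub : WuLoc f ε w ∩ sphere w c ⊆ ⋃ q : C, ShatSet f x ν q := by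
    rintro y ⟨hyu, hyc⟩
    by_contra hy
    have hys : y ∈ WsLoc f (2 * ε) w := hS.mk_mem_of_isClosed (isClosed_setOf_mem_WsLoc f _) hpairs
      ⟨hsub w (mem_closedBall_self hc.le), hw⟩ ⟨hsub y (sphere_subset_closedBall hyc), hy⟩
    have hwy : w = y :=
      hexp.eq_of_mem_WsLoc_of_mem_WuLoc hys (WuLoc_mono (by linarith) hyu)
    exact ne_of_mem_sphere hyc hc.ne' hwy.symm
  have hK : IsCompact (WuLoc f ε w ∩ sphere w c) := (isClosed_WuLoc.inter isClosed_sphere).isCompact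
  obtain ⟨q, hq⟩ := hS.exists_subset_interior_filling hK hKsub
  obtain ⟨y, hyu, hyc, hyq⟩ := exists_mem_WuLoc_notMem_interior_ShatSet hS hC hε hexp hi hdense hc
    hcball q fun hwq => hw (mem_iUnion_of_mem q hwq)
  exact hyq (hq ⟨hyu, hyc⟩)

theorem stmt15_general {ρ : ℝ} (hε : 0 ≤ ε) (hexp : IsExpansive f (2 * ε))
    (hi : HasLocalPlaques f n x ν ε) (hdense : Dense (PerH f n)) (hδ : δ < ν)
    (hC : IsChainIn f n x ν δ C) (hacc : x ∈ closure C)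
    (hz : z ∈ frontier (closure (⋃ q ∈ C, ShatSet f x ν q))) (hzx : z ∈ ball x ν) (hρ : 0 < ρ) :
    ∃ V : Set M, IsOpen V ∧ z ∈ V ∧ ∀ q ∈ C ∩ V,
      closure (⋃ q' ∈ C, ShatSet f x ν q') ∩ closure (ball x δ) ⊆ ShatSet f x ν q ∪
        {w : M | ∃ a ∈ frontier (closure (⋃ q' ∈ C, ShatSet f x ν q')), dist w a < ρ} := by
  have hx := notMem_SpSet_of_mem_frontier hz hzx
  have hCP := hC.subset_PerH_inter_ball hδ.le
  have hS := hC.isUmbrellaChain hδ.le (hexp.anti (by linarith)) hi hacc hx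
  rw [biUnion_eq_iUnion] at *
  have hcore := interior_closure_iUnion_ShatSet_inter_ball_subset hS hCP hε hexp hi hdense
  set T := ⋃ q : C, ShatSet f x ν q
  let K : Set M := (closure T ∩ closure (ball x δ)) \ thickening ρ (frontier (closure T))
  have hK : IsCompact K :=
    ((isClosed_closure.inter isClosed_closure).sdiff isOpen_thickening).isCompact
  have hδν : closure (ball x δ) ⊆ ball x ν :=
    closure_ball_subset_closedBall.trans (closedBall_subset_ball hδ)
  have hKT : K ⊆ T := fun y hy =>
    hcore ⟨sdiff_thickening_frontier_subset_interior hρ ⟨hy.1.1, hy.2⟩, hδν hy.1.2⟩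
  have hzT : z ∉ T := fun hzT =>
    hz.2 (interior_maximal subset_closure hS.isOpen_iUnion_filling hzT)
  obtain ⟨V, hV, hzV, hVK⟩ := hS.exists_isOpen_subset_filling hK hKT hzx hzT
  refine ⟨V, hV, hzV, fun q ⟨hqC, hqV⟩ y hy => or_iff_not_imp_right.2 fun hyρ => ?_⟩
  exact hVK ⟨q, hqC⟩ ⟨q, mem_SpSet_self (hCP hqC).2, hqV⟩
    ⟨hy, fun hyρ' => hyρ (mem_thickening_iff.1 hyρ')⟩

end Chains

/-- **Lemma (uniform convergence of umbrellas to the frontier).** -/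
theorem stmt15
    {M : Type*} [MetricSpace M] [CompactSpace M] [ConnectedSpace M]
    (n : ℕ) [ChartedSpace (EuclideanSpace ℝ (Fin n)) M]
    (f : M ≃ₜ M) (α : ℝ) (hα : 0 < α) (hexp : IsExpansive f α)
    (x : M) (hx : ¬ AdmitsLPS f n x)
    (ε : ℝ) (hε : 0 < ε) (hεα : 2 * ε < α) (ν : ℝ) (hν : 0 < ν)
    (hi : ∀ p ∈ PerH f n ∩ Metric.ball x ν,
      SpSet f x ν p ⊆ WsLoc f ε p ∧ UpSet f x ν p ⊆ WuLoc f ε p)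
    (hii : ∀ p ∈ PerHr f n (n - 1) ∩ Metric.ball x ν,
      ∃ V₁ V₂ : Set M, TwoComponents (Metric.ball x ν \ SpSet f x ν p) V₁ V₂)
    (hdense : closure (PerH f n) = Set.univ)
    (δ : ℝ) (hδ : δ ∈ Set.Ioo (0 : ℝ) ν)
    (hfin : {C : Set M | IsMaxChainIn f n x ν δ C}.Finite)
    (hdisj : ∀ C₁ C₂ : Set M, IsMaxChainIn f n x ν δ C₁ → IsMaxChainIn f n x ν δ C₂ →
      C₁ ≠ C₂ → Disjoint C₁ C₂)
    (hacc : ∀ C : Set M, IsMaxChainIn f n x ν δ C → x ∈ closure C)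
    :
    ∀ p ∈ Xdelta f n x δ, ∀ C : Set M, IsMaxChainIn f n x ν δ C → p ∈ C →
      ∀ z ∈ frontier (closure (⋃ q ∈ C, ShatSet f x ν q)) ∩ Metric.ball x δ,
        ∀ ρ : ℝ, 0 < ρ →
          ∃ V : Set M, IsOpen V ∧ z ∈ V ∧
            ∀ q ∈ C ∩ V,
              closure (⋃ q' ∈ C, ShatSet f x ν q') ∩ closure (Metric.ball x δ) ⊆
                ShatSet f x ν q ∪
                  {w : M | ∃ a ∈ frontier (closure (⋃ q' ∈ C, ShatSet f x ν q')),
                    dist w a < ρ} := by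
  intro p _ C hC _ z hz ρ hρ
  have := ChartedSpace.locallyConnectedSpace (EuclideanSpace ℝ (Fin n)) M
  exact stmt15_general hε.le (hexp.anti hεα.le) hi (dense_iff_closure_eq.2 hdense) hδ.2 hC.1
    (hacc C hC) hz.1 (ball_subset_ball hδ.2.le hz.2) hρ
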